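/- (Fisher-type inequality) Define ū(βJ, βb) = liminf_{N→∞} E[⟨U_N⟩_{βJ,βb}]/N, where ⟨·⟩_{βJ,βb} is the Gibbs expectation for the Hamiltonian J·U_N − b Σ_j S_j^x at inverse temperature β. Then for all β > 0, J > 0, b ≥ 0 and every a > 0, ū(βJ, βb) + a^{−1}·ln(cosh(βb)) ≥ ū(βJ + a, 0), where ū(βJ + a, 0) is the corresponding zero-field quantity at coupling parameter βJ + a. -/

import Mathlib

open Matrix MeasureTheory ProbabilityTheory

noncomputable section

abbrev Conf (N : ℕ) := Fin N → Fin 2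

def Sz (N : ℕ) (j : Fin N) : Matrix (Conf N) (Conf N) ℂ :=
  Matrix.diagonal fun σ => if σ j = 0 then 1 else -1

def Sx (N : ℕ) (j : Fin N) : Matrix (Conf N) (Conf N) ℂ :=
  Matrix.of fun σ τ => if τ = Function.update σ j (1 - σ j) then 1 else 0

def UN (N : ℕ) (g : Fin N → Fin N → ℝ) : Matrix (Conf N) (Conf N) ℂ :=
  (-(1 / Real.sqrt N)) • ∑ j : Fin N, ∑ k : Fin N,
    if j < k then g j k • (Sz N j * Sz N k) else 0

def HN (N : ℕ) (J b : ℝ) (g : Fin N → Fin N → ℝ) : Matrix (Conf N) (Conf N) ℂ :=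
  J • UN N g - b • ∑ j : Fin N, Sx N j

/-- Gibbs expectation (real part of the trace ratio). -/
def gibbs {n : Type*} [Fintype n] [DecidableEq n] (β : ℝ) (H A : Matrix n n ℂ) : ℝ :=
  ((NormedSpace.exp ((-β) • H) * A).trace / (NormedSpace.exp ((-β) • H)).trace).re

/-- `ū(c, d) = liminf_N E[⟨U_N⟩_{c,d}]/N`, where `⟨·⟩_{c,d}` is the Gibbs expectation
for `c·U_N − d·Σ_j S_j^x` (i.e. with parameters `c = βJ` and `d = βb`). -/
def ubar {Ω : Type*} [MeasurableSpace Ω] (μ : Measure Ω)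
    (g : (N : ℕ) → Ω → Fin N → Fin N → ℝ) (c d : ℝ) : ℝ :=
  Filter.liminf
    (fun N : ℕ => (∫ ω, gibbs 1 (HN N c d (g N ω)) (UN N (g N ω)) ∂μ) / N)
    Filter.atTop

set_option linter.unusedSectionVars false
section SpectralPart
variable {n : Type*} [Fintype n] [DecidableEq n]

lemma jensen_exp (p x : n → ℝ) (hp : ∀ i, 0 ≤ p i) (Z : ℝ) (hZ : ∑ i, p i = Z) (hZ0 : 0 < Z) :
    Z * Real.exp ((∑ i, p i * x i) / Z) ≤ ∑ i, p i * Real.exp (x i) := by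
  set m := (∑ i, p i * x i) / Z with hm
  have hm' : ∑ i, p i * x i = m * Z := by rw [hm]; field_simp
  have h1 : ∀ i ∈ Finset.univ, p i * (Real.exp m * (1 + x i - m)) ≤ p i * Real.exp (x i) := by
    intro i _
    apply mul_le_mul_of_nonneg_left _ (hp i)
    have := Real.add_one_le_exp (x i - m)
    have h2 : Real.exp (x i) = Real.exp m * Real.exp (x i - m) := by
      rw [← Real.exp_add]; congr 1; ring
    rw [h2]
    apply mul_le_mul_of_nonneg_left _ (Real.exp_pos m).le
    linarith
  refine le_trans (le_of_eq ?_) (Finset.sum_le_sum h1)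
  have : ∀ i, p i * (Real.exp m * (1 + x i - m))
      = Real.exp m * ((1 - m) * p i + p i * x i) := by intro i; ring
  simp_rw [this]
  rw [← Finset.mul_sum, Finset.sum_add_distrib, ← Finset.mul_sum, hZ, hm']
  ring

lemma spectral_form {A : Matrix n n ℂ} (hA : A.IsHermitian) :
    ∃ (V : Matrix n n ℂ) (l : n → ℝ), star V * V = 1 ∧ V * star V = 1 ∧
      A = V * diagonal (fun i => (l i : ℂ)) * star V := by
  refine ⟨hA.eigenvectorUnitary, hA.eigenvalues, ?_, ?_, ?_⟩
  · exact Unitary.coe_star_mul_self _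
  · exact Unitary.coe_mul_star_self _
  · have := hA.spectral_theorem
    rw [Unitary.conjStarAlgAut_apply] at this
    exact this

lemma exp_form {A V : Matrix n n ℂ} {l : n → ℝ} (h1 : star V * V = 1) (h2 : V * star V = 1)
    (hA : A = V * diagonal (fun i => (l i : ℂ)) * star V) :
    NormedSpace.exp A = V * diagonal (fun i => (Real.exp (l i) : ℂ)) * star V := by
  have hinv : V⁻¹ = star V := Matrix.inv_eq_left_inv h1
  have hu : IsUnit V := ⟨⟨V, star V, h2, h1⟩, rfl⟩
  rw [hA, ← hinv, Matrix.exp_conj _ _ hu, Matrix.exp_diagonal]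
  congr 3
  ext i
  rw [Pi.coe_exp, Complex.ofReal_exp, Complex.exp_eq_exp_ℂ]

lemma pow_form {A V : Matrix n n ℂ} {l : n → ℝ} (h1 : star V * V = 1) (h2 : V * star V = 1)
    (hA : A = V * diagonal (fun i => (l i : ℂ)) * star V) (s c : ℝ) (k : ℕ) :
    ((1 : Matrix n n ℂ) + (c : ℂ) • (A + (s : ℂ) • 1)) ^ k
      = V * diagonal (fun i => (((1 + c * (l i + s)) ^ k : ℝ) : ℂ)) * star V := by
  have hb : (1 : Matrix n n ℂ) + (c : ℂ) • (A + (s : ℂ) • 1)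
      = V * diagonal (fun i => ((1 + c * (l i + s) : ℝ) : ℂ)) * star V := by
    have : diagonal (fun i => ((1 + c * (l i + s) : ℝ) : ℂ))
        = 1 + (c : ℂ) • (diagonal (fun i => (l i : ℂ)) + (s : ℂ) • 1) := by
      ext i j
      by_cases hij : i = j
      · subst hij; simp; ring
      · simp [hij]
    rw [this, hA]
    simp only [mul_add, add_mul, smul_add, Matrix.mul_smul, Matrix.smul_mul, mul_one, h2]
  induction k with
  | zero => simp [h2]
  | succ k ih =>
    rw [pow_succ, ih, hb]
    have : ∀ P Q : Matrix n n ℂ, V * P * star V * (V * Q * star V) = V * (P * Q) * star V := by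
      intro P Q
      calc V * P * star V * (V * Q * star V) = V * P * (star V * V) * Q * star V := by
            simp only [mul_assoc]
        _ = _ := by rw [h1]; simp only [mul_assoc, mul_one]
    rw [this, diagonal_mul_diagonal]
    congr 3
    ext i
    push_cast; ring

lemma trace_form {V : Matrix n n ℂ} {l : n → ℝ} (h1 : star V * V = 1) :
    (V * diagonal (fun i => (l i : ℂ)) * star V).trace = ((∑ i, l i : ℝ) : ℂ) := by
  rw [Matrix.trace_mul_comm, ← mul_assoc, h1, one_mul, trace_diagonal]
  push_cast; rfl

lemma trace_exp_im {A : Matrix n n ℂ} (hA : A.IsHermitian) :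
    (NormedSpace.exp A).trace = (((NormedSpace.exp A).trace.re : ℝ) : ℂ) := by
  obtain ⟨V, l, h1, h2, h⟩ := spectral_form hA
  rw [exp_form h1 h2 h, trace_form h1, Complex.ofReal_re]

lemma peierls {K W : Matrix n n ℂ} (hK : K.IsHermitian) (hW1 : star W * W = 1)
    (hW2 : W * star W = 1) :
    ∑ i, Real.exp ((star W * K * W) i i).re ≤ (NormedSpace.exp K).trace.re := by
  obtain ⟨V, l, h1, h2, h⟩ := spectral_form hK
  rw [exp_form h1 h2 h, trace_form h1, Complex.ofReal_re]
  set Q := star W * V with hQ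
  have hQs : star Q = star V * W := by rw [hQ, star_mul, star_star]
  have q1 : star Q * Q = 1 := by
    rw [hQs, hQ]
    calc star V * W * (star W * V) = star V * (W * star W) * V := by simp only [mul_assoc]
      _ = 1 := by rw [hW2, mul_one, h1]
  have q2 : Q * star Q = 1 := by
    rw [hQs, hQ]
    calc star W * V * (star V * W) = star W * (V * star V) * W := by simp only [mul_assoc]
      _ = 1 := by rw [h2, mul_one, hW1]
  have hrow : ∀ i, ∑ j, Complex.normSq (Q i j) = 1 := by
    intro i
    have := congrFun (congrFun q2 i) i
    rw [Matrix.mul_apply, Matrix.one_apply_eq] at this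
    apply Complex.ofReal_injective
    push_cast
    rw [← this]
    refine Finset.sum_congr rfl fun j _ => ?_
    rw [Matrix.star_apply, Complex.normSq_eq_conj_mul_self, mul_comm]; rfl
  have hcol : ∀ j, ∑ i, Complex.normSq (Q i j) = 1 := by
    intro j
    have := congrFun (congrFun q1 j) j
    rw [Matrix.mul_apply, Matrix.one_apply_eq] at this
    apply Complex.ofReal_injective
    push_cast
    rw [← this]
    refine Finset.sum_congr rfl fun i _ => ?_
    rw [Matrix.star_apply, Complex.normSq_eq_conj_mul_self]; rfl
  have hd : ∀ i, ((star W * K * W) i i).re = ∑ j, Complex.normSq (Q i j) * l j := by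
    intro i
    have : star W * K * W = Q * diagonal (fun i => (l i : ℂ)) * star Q := by
      rw [hQs, hQ, h]; simp only [mul_assoc]
    rw [this, Matrix.mul_apply]
    rw [Complex.re_sum]
    refine Finset.sum_congr rfl fun j _ => ?_
    rw [mul_diagonal, Matrix.star_apply]
    have : Q i j * (l j : ℂ) * star (Q i j) = ((Complex.normSq (Q i j) * l j : ℝ) : ℂ) := by
      push_cast
      rw [Complex.normSq_eq_conj_mul_self]
      change _ * _ * (starRingEnd ℂ) _ = _
      ring
    rw [this, Complex.ofReal_re]
  calc ∑ i, Real.exp ((star W * K * W) i i).re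
      ≤ ∑ i, ∑ j, Complex.normSq (Q i j) * Real.exp (l j) := by
        refine Finset.sum_le_sum fun i _ => ?_
        have := jensen_exp (fun j => Complex.normSq (Q i j)) l (fun j => Complex.normSq_nonneg _)
          1 (hrow i) one_pos
        rw [one_mul, div_one] at this
        rw [hd]; exact this
    _ = ∑ j, Real.exp (l j) := by
        rw [Finset.sum_comm]
        refine Finset.sum_congr rfl fun j _ => ?_
        rw [← Finset.sum_mul, hcol, one_mul]

lemma trace_exp_pos [Nonempty n] {A : Matrix n n ℂ} (hA : A.IsHermitian) :
    0 < (NormedSpace.exp A).trace.re := by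
  obtain ⟨V, l, h1, h2, h⟩ := spectral_form hA
  rw [exp_form h1 h2 h, trace_form h1, Complex.ofReal_re]
  exact Finset.sum_pos (fun i _ => Real.exp_pos _) Finset.univ_nonempty

/-- Peierls-Bogoliubov -/
lemma peierls_bogoliubov [Nonempty n] {A B : Matrix n n ℂ} (hA : A.IsHermitian)
    (hB : B.IsHermitian) :
    Real.log (NormedSpace.exp A).trace.re
      + ((NormedSpace.exp A * B).trace / (NormedSpace.exp A).trace).re
      ≤ Real.log (NormedSpace.exp (A + B)).trace.re := by
  have hZ := trace_exp_pos hA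
  obtain ⟨V, l, h1, h2, h⟩ := spectral_form hA
  have hP := peierls (hA.add hB) h1 h2
  set b : n → ℝ := fun i => ((star V * B * V) i i).re with hb
  have hd : ∀ i, ((star V * (A + B) * V) i i).re = l i + b i := by
    intro i
    have : star V * (A + B) * V = diagonal (fun i => (l i : ℂ)) + star V * B * V := by
      rw [mul_add, add_mul]
      congr 1
      rw [h]
      calc star V * (V * diagonal (fun i => (l i : ℂ)) * star V) * V
          = (star V * V) * diagonal (fun i => (l i : ℂ)) * (star V * V) := by
            simp only [mul_assoc]
        _ = _ := by rw [h1, one_mul, mul_one]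
    rw [this]
    simp [hb]
  have ht : (NormedSpace.exp A).trace = ((∑ i, Real.exp (l i) : ℝ) : ℂ) := by
    rw [exp_form h1 h2 h, trace_form h1]
  have htB : (NormedSpace.exp A * B).trace.re = ∑ i, Real.exp (l i) * b i := by
    rw [exp_form h1 h2 h]
    have : (V * diagonal (fun i => (Real.exp (l i) : ℂ)) * star V * B).trace
        = (diagonal (fun i => (Real.exp (l i) : ℂ)) * (star V * B * V)).trace := by
      rw [mul_assoc, mul_assoc, Matrix.trace_mul_comm]
      simp only [mul_assoc]
    rw [this, Matrix.trace, Complex.re_sum]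
    refine Finset.sum_congr rfl fun i _ => ?_
    rw [Matrix.diag_apply, Matrix.diagonal_mul, Complex.re_ofReal_mul]
  rw [ht, Complex.ofReal_re] at hZ
  rw [ht, Complex.ofReal_re, Complex.div_ofReal_re, htB]
  set Z := ∑ i, Real.exp (l i)
  have hJ := jensen_exp (fun i => Real.exp (l i)) b (fun i => (Real.exp_pos _).le) Z rfl hZ
  have : Real.log Z + (∑ i, Real.exp (l i) * b i) / Z
      = Real.log (Z * Real.exp ((∑ i, Real.exp (l i) * b i) / Z)) := by
    rw [Real.log_mul hZ.ne' (Real.exp_pos _).ne', Real.log_exp]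
  rw [this]
  apply Real.log_le_log (mul_pos hZ (Real.exp_pos _))
  refine le_trans (le_trans hJ (le_of_eq ?_)) hP
  refine Finset.sum_congr rfl fun i _ => ?_
  rw [hd, Real.exp_add]

/-- Limit formula for the trace of the exponential along powers of two, with a shift. -/
lemma tendsto_trace {A : Matrix n n ℂ} (hA : A.IsHermitian) (s : ℝ) :
    Filter.Tendsto (fun k : ℕ => (((1 : Matrix n n ℂ)
      + (((2 : ℝ) ^ k)⁻¹ : ℝ) • (A + s • 1)) ^ (2 ^ k)).trace.re)
      Filter.atTop (nhds (Real.exp s * (NormedSpace.exp A).trace.re)) := by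
  obtain ⟨V, l, h1, h2, h⟩ := spectral_form hA
  rw [exp_form h1 h2 h, trace_form h1, Complex.ofReal_re]
  have he : ∀ k : ℕ, (((1 : Matrix n n ℂ)
      + (((2 : ℝ) ^ k)⁻¹ : ℝ) • (A + s • 1)) ^ (2 ^ k)).trace.re
      = ∑ i, (1 + (l i + s) / ((2 ^ k : ℕ) : ℝ)) ^ (2 ^ k) := by
    intro k
    have := pow_form h1 h2 h s (((2 : ℝ) ^ k)⁻¹) (2 ^ k)
    have hs : ∀ (r : ℝ) (M : Matrix n n ℂ), r • M = (r : ℂ) • M := by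
      intro r M; ext i j; simp
    rw [hs, hs, this, trace_form h1, Complex.ofReal_re]
    refine Finset.sum_congr rfl fun i _ => ?_
    push_cast
    congr 2
    field_simp
  simp_rw [he]
  rw [Finset.mul_sum]
  apply tendsto_finsetSum
  intro i _
  have := (Real.tendsto_one_add_div_pow_exp (l i + s)).comp
    (tendsto_pow_atTop_atTop_of_one_lt (r := 2) (by norm_num : 1 < 2))
  rw [← Real.exp_add, add_comm s]
  exact this

end SpectralPart

section TracePart
variable {n : Type*} [Fintype n] [DecidableEq n]

lemma two_trace_mul_le (P Q : Matrix n n ℝ) :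
    2 * (P * Q).trace ≤ (P * Pᵀ).trace + (Q * Qᵀ).trace := by
  have h1 : (Q * Qᵀ).trace = (Qᵀ * Q).trace := Matrix.trace_mul_comm _ _
  rw [h1]
  simp only [Matrix.trace, Matrix.diag_apply, Matrix.mul_apply, Matrix.transpose_apply]
  rw [Finset.mul_sum, ← Finset.sum_add_distrib]
  refine Finset.sum_le_sum fun i _ => ?_
  rw [Finset.mul_sum, ← Finset.sum_add_distrib]
  refine Finset.sum_le_sum fun j _ => ?_
  nlinarith [sq_nonneg (P i j - Q j i)]

lemma trace_pow_comm (A B : Matrix n n ℝ) (m : ℕ) :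
    ((A * B) ^ m).trace = ((B * A) ^ m).trace := by
  cases m with
  | zero => simp
  | succ m =>
    rw [pow_succ, ← mul_assoc, mul_pow_mul, Matrix.trace_mul_comm, ← mul_assoc, ← pow_succ']

lemma trace_pow_two (k : ℕ) :
    (∀ M : Matrix n n ℝ, (M ^ (2 ^ (k + 1))).trace ≤ ((M * Mᵀ) ^ (2 ^ k)).trace) ∧
    (∀ P Q : Matrix n n ℝ, Pᵀ = P → Qᵀ = Q →
      ((P * Q) ^ (2 ^ k)).trace ≤ (P ^ (2 ^ k) * Q ^ (2 ^ k)).trace) := by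
  induction k with
  | zero =>
    constructor
    · intro M
      have := two_trace_mul_le M M
      simp only [zero_add, pow_one, pow_zero, pow_two]
      linarith
    · intro P Q _ _
      simp
  | succ k ih =>
    obtain ⟨hS, hG⟩ := ih
    constructor
    · intro M
      have e1 : M ^ (2 ^ (k + 1 + 1)) = (M * M) ^ (2 ^ (k + 1)) := by
        rw [← pow_two, ← pow_mul, pow_succ' 2 (k + 1)]
      have hP : (Mᵀ * M)ᵀ = Mᵀ * M := by simp
      have hQ : (M * Mᵀ)ᵀ = M * Mᵀ := by simp
      have e2 : ((M * M * (M * M)ᵀ) ^ (2 ^ k)).trace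
          = (((Mᵀ * M) * (M * Mᵀ)) ^ (2 ^ k)).trace := by
        rw [Matrix.transpose_mul,
          show M * M * (Mᵀ * Mᵀ) = (M * (M * Mᵀ)) * Mᵀ by simp only [mul_assoc],
          trace_pow_comm]
        simp only [mul_assoc]
      have e3 := two_trace_mul_le ((Mᵀ * M) ^ (2 ^ k)) ((M * Mᵀ) ^ (2 ^ k))
      rw [Matrix.transpose_pow, Matrix.transpose_pow, hP, hQ, ← pow_add, ← pow_add,
        ← two_mul, ← pow_succ', trace_pow_comm Mᵀ M] at e3
      have := hS (M * M)
      have h4 := hG _ _ hP hQ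
      rw [e1]
      linarith
    · intro P Q hP hQ
      have h1 := hS (P * Q)
      have e2 : ((P * Q * (P * Q)ᵀ) ^ (2 ^ k)).trace
          = (((P * P) * (Q * Q)) ^ (2 ^ k)).trace := by
        rw [Matrix.transpose_mul, hP, hQ,
          show P * Q * (Q * P) = (P * (Q * Q)) * P by simp only [mul_assoc],
          trace_pow_comm]
        simp only [mul_assoc]
      have h2 := hG (P * P) (Q * Q) (by rw [Matrix.transpose_mul, hP])
        (by rw [Matrix.transpose_mul, hQ])
      rw [← pow_two P, ← pow_two Q, ← pow_mul, ← pow_mul, ← pow_succ'] at h2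
      rw [← pow_two P, ← pow_two Q] at e2
      linarith

lemma pow_entry_mono {A B : Matrix n n ℝ} (hA : ∀ i j, 0 ≤ A i j) (hAB : ∀ i j, A i j ≤ B i j)
    (k : ℕ) : ∀ i j, 0 ≤ (A ^ k) i j ∧ (A ^ k) i j ≤ (B ^ k) i j := by
  induction k with
  | zero =>
    intro i j
    by_cases h : i = j
    · subst h; simp
    · simp [h]
  | succ k ih =>
    intro i j
    rw [pow_succ, pow_succ, Matrix.mul_apply, Matrix.mul_apply]
    refine ⟨Finset.sum_nonneg fun l _ => mul_nonneg (ih i l).1 (hA l j), ?_⟩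
    refine Finset.sum_le_sum fun l _ => ?_
    exact mul_le_mul (ih i l).2 (hAB l j) (hA l j) ((ih i l).1.trans (ih i l).2)

end TracePart

def tk (N : ℕ) (s : ℝ) : Matrix (Conf N) (Conf N) ℝ :=
  Matrix.of fun σ τ => ∏ j, if σ j = τ j then Real.cosh s else Real.sinh s

lemma tk_zero (N : ℕ) : tk N 0 = 1 := by
  ext σ τ
  rw [tk, Matrix.of_apply]
  by_cases h : σ = τ
  · subst h; simp
  · rw [Matrix.one_apply_ne h]
    obtain ⟨j, hj⟩ := Function.ne_iff.mp h
    apply Finset.prod_eq_zero (Finset.mem_univ j)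
    simp [hj]

lemma tk_mul (N : ℕ) (s t : ℝ) : tk N s * tk N t = tk N (s + t) := by
  ext σ τ
  rw [Matrix.mul_apply]
  simp only [tk, Matrix.of_apply, ← Finset.prod_mul_distrib]
  have := Finset.prod_univ_sum (fun _ : Fin N => (Finset.univ : Finset (Fin 2)))
    (fun j x => (if σ j = x then Real.cosh s else Real.sinh s)
      * (if x = τ j then Real.cosh t else Real.sinh t))
  rw [Fintype.piFinset_univ] at this
  rw [← this]
  refine Finset.prod_congr rfl fun j _ => ?_
  rw [Fin.sum_univ_two, Real.cosh_add, Real.sinh_add]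
  generalize σ j = x
  generalize τ j = y
  fin_cases x <;> fin_cases y <;> simp <;> ring

lemma tk_pow (N : ℕ) (s : ℝ) (m : ℕ) : tk N s ^ m = tk N (m * s) := by
  induction m with
  | zero => simp [tk_zero]
  | succ m ih =>
    rw [pow_succ, ih, tk_mul]
    congr 1
    push_cast; ring

lemma tk_symm (N : ℕ) (s : ℝ) : (tk N s)ᵀ = tk N s := by
  ext σ τ
  simp only [tk, Matrix.of_apply, Matrix.transpose_apply]
  refine Finset.prod_congr rfl fun j _ => ?_
  simp only [eq_comm]

lemma tk_diag (N : ℕ) (s : ℝ) (σ : Conf N) : tk N s σ σ = Real.cosh s ^ N := by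
  simp [tk]

lemma tk_nonneg (N : ℕ) (s : ℝ) (hs : 0 ≤ s) (σ τ : Conf N) : 0 ≤ tk N s σ τ := by
  rw [tk, Matrix.of_apply]
  refine Finset.prod_nonneg fun j _ => ?_
  split_ifs
  · exact (Real.cosh_pos s).le
  · exact Real.sinh_nonneg_iff.mpr hs

def flipC {N : ℕ} (σ : Conf N) (j : Fin N) : Conf N := Function.update σ j (1 - σ j)

lemma one_sub_ne (x : Fin 2) : 1 - x ≠ x := by fin_cases x <;> simp

lemma flipC_ne {N : ℕ} (σ : Conf N) (j : Fin N) : flipC σ j ≠ σ := by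
  intro h
  have := congrFun h j
  simp only [flipC, Function.update_self] at this
  exact one_sub_ne _ this

lemma flipC_inj {N : ℕ} (σ : Conf N) {i j : Fin N} (h : flipC σ i = flipC σ j) : i = j := by
  by_contra hne
  have := congrFun h i
  simp only [flipC, Function.update_self, Function.update_of_ne hne] at this
  exact one_sub_ne _ this

lemma tk_flip (N : ℕ) (s : ℝ) (hs : 0 ≤ s) (σ : Conf N) (j : Fin N) : s ≤ tk N s σ (flipC σ j) := by
  rw [tk, Matrix.of_apply, ← Finset.mul_prod_erase _ _ (Finset.mem_univ j)]
  have h1 : σ j ≠ flipC σ j j := by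
    simp only [flipC, Function.update_self]
    exact (one_sub_ne _).symm
  rw [if_neg h1]
  have h2 : 1 ≤ ∏ x ∈ Finset.univ.erase j,
      if σ x = flipC σ j x then Real.cosh s else Real.sinh s := by
    apply Finset.one_le_prod
    intro i hi
    have : flipC σ j i = σ i := by
      simp only [flipC]; rw [Function.update_of_ne (Finset.ne_of_mem_erase hi)]
    rw [this, if_pos rfl]
    exact Real.one_le_cosh s
  have h3 := Real.self_le_sinh_iff.mpr hs
  nlinarith

def RR (N : ℕ) (D : Conf N → ℝ) (d : ℝ) : Matrix (Conf N) (Conf N) ℝ :=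
  Matrix.diagonal D + d • Matrix.of fun σ τ => ∑ j, if τ = flipC σ j then (1 : ℝ) else 0

lemma RR_bound (N : ℕ) (D : Conf N → ℝ) (d s h : ℝ) (hd : 0 ≤ d) (hs : ∀ σ, 0 ≤ D σ + s)
    (hh : 0 ≤ h) (σ τ : Conf N) :
    0 ≤ ((1 : Matrix (Conf N) (Conf N) ℝ) + h • (RR N D d + s • 1)) σ τ ∧
    ((1 : Matrix (Conf N) (Conf N) ℝ) + h • (RR N D d + s • 1)) σ τ
      ≤ (Matrix.diagonal (fun σ => Real.exp (h * (D σ + s))) * tk N (h * d)) σ τ := by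
  rw [Matrix.diagonal_mul]
  have hhs := mul_nonneg hh (hs σ)
  have hhd := mul_nonneg hh hd
  have hexp := Real.add_one_le_exp (h * (D σ + s))
  by_cases e : σ = τ
  · subst e
    have hz : ∑ j, (if σ = flipC σ j then (1 : ℝ) else 0) = 0 :=
      Finset.sum_eq_zero fun j _ => if_neg (flipC_ne σ j).symm
    have : ((1 : Matrix (Conf N) (Conf N) ℝ) + h • (RR N D d + s • 1)) σ σ
        = 1 + h * (D σ + s) := by
      simp only [RR, Matrix.add_apply, Matrix.smul_apply, Matrix.of_apply, hz,
        Matrix.diagonal_apply_eq, Matrix.one_apply_eq, smul_eq_mul]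
      ring
    rw [this, tk_diag]
    have hc := one_le_pow₀ (Real.one_le_cosh (h * d)) (n := N)
    constructor
    · linarith
    · nlinarith
  · have : ((1 : Matrix (Conf N) (Conf N) ℝ) + h • (RR N D d + s • 1)) σ τ
        = h * d * ∑ j, (if τ = flipC σ j then (1 : ℝ) else 0) := by
      simp [RR, e, mul_assoc]
    rw [this]
    have hn : 0 ≤ ∑ j, (if τ = flipC σ j then (1 : ℝ) else 0) :=
      Finset.sum_nonneg fun j _ => by split_ifs <;> norm_num
    refine ⟨mul_nonneg hhd hn, ?_⟩
    by_cases hj : ∃ j, τ = flipC σ j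
    · obtain ⟨j, rfl⟩ := hj
      have : ∑ i, (if flipC σ j = flipC σ i then (1 : ℝ) else 0) = 1 := by
        rw [Finset.sum_eq_single j]
        · simp
        · intro i _ hi
          exact if_neg fun h' => hi (flipC_inj σ h').symm
        · simp
      rw [this]
      have := tk_flip N (h * d) hhd σ j
      nlinarith
    · push Not at hj
      have : ∑ i, (if τ = flipC σ i then (1 : ℝ) else 0) = 0 :=
        Finset.sum_eq_zero fun i _ => if_neg (hj i)
      rw [this, mul_zero]
      exact mul_nonneg (Real.exp_pos _).le (tk_nonneg N _ hhd σ τ)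

lemma trace_approx (N : ℕ) (D : Conf N → ℝ) (d s : ℝ) (hd : 0 ≤ d) (hs : ∀ σ, 0 ≤ D σ + s)
    (k : ℕ) :
    (((1 : Matrix (Conf N) (Conf N) ℝ) + ((2 : ℝ) ^ k)⁻¹ • (RR N D d + s • 1)) ^ (2 ^ k)).trace
      ≤ Real.exp s * (Real.cosh d ^ N * ∑ σ, Real.exp (D σ)) := by
  set h : ℝ := ((2 : ℝ) ^ k)⁻¹ with hh
  have hh0 : 0 ≤ h := by positivity
  have hh1 : ((2 ^ k : ℕ) : ℝ) * h = 1 := by rw [hh]; push_cast; field_simp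
  have hb := RR_bound N D d s h hd hs hh0
  have h1 := pow_entry_mono (fun i j => (hb i j).1) (fun i j => (hb i j).2) (2 ^ k)
  have h2 := (trace_pow_two (n := Conf N) k).2
    (Matrix.diagonal (fun σ => Real.exp (h * (D σ + s)))) (tk N (h * d))
    (Matrix.diagonal_transpose _) (tk_symm _ _)
  refine le_trans (Finset.sum_le_sum fun i _ => (h1 i i).2) (le_trans h2 (le_of_eq ?_))
  rw [tk_pow, Matrix.diagonal_pow, ← mul_assoc, hh1, one_mul, Matrix.trace, Finset.mul_sum,
    Finset.mul_sum]
  refine Finset.sum_congr rfl fun σ _ => ?_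
  rw [Matrix.diag_apply, Matrix.diagonal_mul, tk_diag, Pi.pow_apply, ← Real.exp_nat_mul,
    ← mul_assoc, hh1, one_mul, Real.exp_add]
  ring

lemma RR_complex (N : ℕ) (D : Conf N → ℝ) (d : ℝ) :
    Matrix.diagonal (fun σ => (D σ : ℂ)) + d • ∑ j, Sx N j = (RR N D d).map Complex.ofReal := by
  ext σ τ
  simp only [RR, Matrix.add_apply, Matrix.map_apply, Matrix.smul_apply, Matrix.sum_apply, Sx,
    Matrix.of_apply, flipC, Matrix.diagonal_apply]
  by_cases h : σ = τ
  · simp [h]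
  · simp only [if_neg h, zero_add, smul_eq_mul, Complex.real_smul, Complex.ofReal_mul,
      Complex.ofReal_sum]
    congr 1
    refine Finset.sum_congr rfl fun j _ => ?_
    by_cases hj : τ = Function.update σ j (1 - σ j)
    · rw [if_pos hj]; exact Complex.ofReal_one.symm.trans (congrArg Complex.ofReal (if_pos hj)).symm
    · rw [if_neg hj]; exact Complex.ofReal_zero.symm.trans (congrArg Complex.ofReal (if_neg hj)).symm

lemma RR_symm_aux {N : ℕ} (σ τ : Conf N) (j : Fin N) : τ = flipC σ j → σ = flipC τ j := by
  rintro rfl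
  have : ∀ x : Fin 2, 1 - (1 - x) = x := by intro x; fin_cases x <;> simp
  simp [flipC, this]

lemma HD_herm (N : ℕ) (D : Conf N → ℝ) (d : ℝ) :
    (Matrix.diagonal (fun σ => (D σ : ℂ)) + d • ∑ j, Sx N j).IsHermitian := by
  rw [RR_complex]
  ext σ τ
  simp only [Matrix.conjTranspose_apply, Matrix.map_apply, RR, Matrix.add_apply,
    Matrix.smul_apply, Matrix.of_apply]
  have h1 : ∀ j, (σ = flipC τ j) = (τ = flipC σ j) := fun j =>
    propext ⟨RR_symm_aux _ _ j, RR_symm_aux _ _ j⟩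
  have h2 : Matrix.diagonal D τ σ = Matrix.diagonal D σ τ := by
    rw [Matrix.diagonal_apply, Matrix.diagonal_apply]
    by_cases h : σ = τ
    · subst h; rfl
    · rw [if_neg h, if_neg (Ne.symm h)]
  simp_rw [h1]
  rw [h2]
  exact Complex.conj_ofReal _

/-- Golden-Thompson type bound. -/
lemma golden (N : ℕ) (D : Conf N → ℝ) (d : ℝ) (hd : 0 ≤ d) :
    (NormedSpace.exp (Matrix.diagonal (fun σ => (D σ : ℂ)) + d • ∑ j, Sx N j)).trace.re
      ≤ Real.cosh d ^ N * ∑ σ, Real.exp (D σ) := by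
  set s : ℝ := ∑ σ, |D σ| with hs
  have hs' : ∀ σ, 0 ≤ D σ + s := by
    intro σ
    have := Finset.single_le_sum (f := fun σ => |D σ|) (fun i _ => abs_nonneg _)
      (Finset.mem_univ σ)
    have h2 := neg_abs_le (D σ)
    linarith
  have hT := tendsto_trace (HD_herm N D d) s
  have key := le_of_tendsto' hT (b := Real.exp s * (Real.cosh d ^ N * ∑ σ, Real.exp (D σ))) (by
    intro k
    have h1 := trace_approx N D d s hd hs' k
    refine le_trans (le_of_eq ?_) h1
    rw [RR_complex]
    have : (1 : Matrix (Conf N) (Conf N) ℂ)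
        + (((2 : ℝ) ^ k)⁻¹ : ℝ) • ((RR N D d).map Complex.ofReal + s • 1)
        = Complex.ofRealHom.mapMatrix (1 + ((2 : ℝ) ^ k)⁻¹ • (RR N D d + s • 1)) := by
      ext σ τ
      by_cases h : σ = τ
      · subst h; simp
      · simp [h]
    rw [this, ← map_pow]
    simp only [Matrix.trace, Matrix.diag_apply, RingHom.mapMatrix_apply, Matrix.map_apply,
      Complex.re_sum]
    rfl)
  exact le_of_mul_le_mul_left key (Real.exp_pos s)

abbrev Prs (N : ℕ) := {q : Fin N × Fin N // q.1 < q.2}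

def sg {N : ℕ} (σ : Conf N) (j : Fin N) : ℝ := if σ j = 0 then 1 else -1

/-- Coefficient of `g j k` in `-U`. -/
def rr {N : ℕ} (σ : Conf N) (p : Prs N) : ℝ := 1 / Real.sqrt N * (sg σ p.1.1 * sg σ p.1.2)

def uE {N : ℕ} (g : Fin N → Fin N → ℝ) (σ : Conf N) : ℝ :=
  - ∑ p : Prs N, rr σ p * g p.1.1 p.1.2

lemma sum_prs {N : ℕ} {M : Type*} [AddCommMonoid M] (f : Fin N → Fin N → M) :
    ∑ j, ∑ k, (if j < k then f j k else 0) = ∑ p : Prs N, f p.1.1 p.1.2 := by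
  rw [← Fintype.sum_prod_type' (fun j k => if j < k then f j k else 0), ← Finset.sum_filter]
  exact Finset.sum_subtype _ (by simp) (fun q : Fin N × Fin N => f q.1 q.2)

lemma UN_eq (N : ℕ) (g : Fin N → Fin N → ℝ) :
    UN N g = Matrix.diagonal (fun σ => (uE g σ : ℂ)) := by
  rw [UN, sum_prs (fun j k => g j k • (Sz N j * Sz N k))]
  ext σ τ
  rw [Matrix.smul_apply, Matrix.sum_apply]
  simp only [Sz, Matrix.diagonal_mul_diagonal, Matrix.smul_apply]
  by_cases h : σ = τ
  · subst h
    simp only [Matrix.diagonal_apply_eq, uE, rr]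
    have : ∀ p : Prs N, g p.1.1 p.1.2 • (((if σ p.1.1 = 0 then (1 : ℂ) else -1))
        * (if σ p.1.2 = 0 then 1 else -1)) = ((g p.1.1 p.1.2 * (sg σ p.1.1 * sg σ p.1.2) : ℝ) : ℂ) := by
      intro p
      simp only [sg, Complex.real_smul]
      push_cast
      simp [apply_ite Complex.ofReal]
    simp_rw [this]
    rw [← Complex.ofReal_sum, Complex.real_smul, ← Complex.ofReal_mul]
    congr 1
    rw [neg_mul, Finset.mul_sum]
    congr 1
    refine Finset.sum_congr rfl fun p _ => ?_
    ring
  · simp [h]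

lemma neg_HN (N : ℕ) (c d : ℝ) (g : Fin N → Fin N → ℝ) :
    (-1 : ℝ) • HN N c d g
      = Matrix.diagonal (fun σ => ((-c * uE g σ : ℝ) : ℂ)) + d • ∑ j, Sx N j := by
  rw [HN, UN_eq, smul_sub, sub_eq_add_neg]
  congr 1
  · ext σ τ
    by_cases h : σ = τ
    · subst h; simp
    · simp [h]
  · simp

def LZ {N : ℕ} (g : Fin N → Fin N → ℝ) (c : ℝ) : ℝ := Real.log (∑ σ, Real.exp (-c * uE g σ))

lemma Z_pos {N : ℕ} (g : Fin N → Fin N → ℝ) (c : ℝ) : 0 < ∑ σ, Real.exp (-c * uE g σ) :=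
  Finset.sum_pos (fun _ _ => Real.exp_pos _) Finset.univ_nonempty

lemma F_lower {N : ℕ} (g : Fin N → Fin N → ℝ) (c d : ℝ) :
    LZ g c ≤ Real.log (NormedSpace.exp ((-1 : ℝ) • HN N c d g)).trace.re := by
  rw [neg_HN]
  have hP := peierls (HD_herm N (fun σ => -c * uE g σ) d) (W := 1) (by simp) (by simp)
  apply Real.log_le_log (Z_pos g c)
  refine le_trans (le_of_eq ?_) hP
  refine Finset.sum_congr rfl fun σ _ => ?_
  congr 1
  have hz : ∑ j, (if σ = flipC σ j then (1 : ℝ) else 0) = 0 :=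
    Finset.sum_eq_zero fun j _ => if_neg (flipC_ne σ j).symm
  rw [star_one, one_mul, mul_one, RR_complex, Matrix.map_apply, Complex.ofReal_re]
  simp only [RR, Matrix.add_apply, Matrix.smul_apply, Matrix.of_apply, hz,
        Matrix.diagonal_apply_eq, smul_zero, add_zero]

lemma F_upper {N : ℕ} (g : Fin N → Fin N → ℝ) (c d : ℝ) (hd : 0 ≤ d) :
    Real.log (NormedSpace.exp ((-1 : ℝ) • HN N c d g)).trace.re
      ≤ LZ g c + N * Real.log (Real.cosh d) := by
  rw [neg_HN]
  have h := golden N (fun σ => -c * uE g σ) d hd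
  have h0 := trace_exp_pos (HD_herm N (fun σ => -c * uE g σ) d)
  refine (Real.log_le_log h0 h).trans (le_of_eq ?_)
  rw [Real.log_mul (pow_pos (Real.cosh_pos d) N).ne' (Z_pos g c).ne', Real.log_pow, LZ]
  ring

lemma gibbs_key {N : ℕ} (g : Fin N → Fin N → ℝ) (c d : ℝ) (hd : 0 ≤ d) (a : ℝ) :
    LZ g c - LZ g (c + a) - N * Real.log (Real.cosh d)
      ≤ a * gibbs 1 (HN N c d g) (UN N g) := by
  have hA : ((-1 : ℝ) • HN N c d g).IsHermitian := by rw [neg_HN]; exact HD_herm _ _ _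
  have hB : ((-a) • UN N g).IsHermitian := by
    have := HD_herm N (fun σ => -a * uE g σ) 0
    rw [zero_smul, add_zero] at this
    rw [UN_eq]
    convert this using 1
    ext σ τ
    by_cases h : σ = τ
    · subst h; simp
    · simp [h]
  have hPB := peierls_bogoliubov hA hB
  have hs : (-1 : ℝ) • HN N c d g + (-a) • UN N g = (-1 : ℝ) • HN N (c + a) d g := by
    simp only [HN, smul_sub, smul_smul, add_smul, smul_add]
    module
  have hg : ((NormedSpace.exp ((-1 : ℝ) • HN N c d g) * ((-a) • UN N g)).trace
      / (NormedSpace.exp ((-1 : ℝ) • HN N c d g)).trace).re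
      = - a * gibbs 1 (HN N c d g) (UN N g) := by
    rw [gibbs, Matrix.mul_smul, Matrix.trace_smul, Complex.real_smul, mul_div_assoc,
      Complex.re_ofReal_mul]
  rw [hs, hg] at hPB
  have h1 := F_lower g c d
  have h2 := F_upper g (c + a) d hd
  linarith

lemma gibbs_main {N : ℕ} (g : Fin N → Fin N → ℝ) (c d : ℝ) (hd : 0 ≤ d) (a : ℝ) (ha : 0 < a) :
    gibbs 1 (HN N (c + a) 0 g) (UN N g)
      ≤ gibbs 1 (HN N c d g) (UN N g) + N * (a⁻¹ * Real.log (Real.cosh d)) := by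
  have h1 := gibbs_key g c d hd a
  have h2 := gibbs_key g (c + a) 0 le_rfl (-a)
  simp only [Real.cosh_zero, Real.log_one, mul_zero, sub_zero, add_neg_cancel_right] at h2
  have h3 : a * gibbs 1 (HN N (c + a) 0 g) (UN N g)
      ≤ a * (gibbs 1 (HN N c d g) (UN N g) + N * (a⁻¹ * Real.log (Real.cosh d))) := by
    have : a * (gibbs 1 (HN N c d g) (UN N g) + N * (a⁻¹ * Real.log (Real.cosh d)))
      = a * gibbs 1 (HN N c d g) (UN N g) + N * Real.log (Real.cosh d) := by
      field_simp
    rw [this]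
    linarith
  exact le_of_mul_le_mul_left h3 ha

def MM {N : ℕ} (g : Fin N → Fin N → ℝ) : ℝ :=
  ∑ σ : Conf N, ∑ p : Prs N, |rr σ p| * |g p.1.1 p.1.2|

lemma uE_abs {N : ℕ} (g : Fin N → Fin N → ℝ) (σ : Conf N) : |uE g σ| ≤ MM g := by
  have h1 : |uE g σ| ≤ ∑ p : Prs N, |rr σ p| * |g p.1.1 p.1.2| := by
    rw [uE, abs_neg]
    refine (Finset.abs_sum_le_sum_abs _ _).trans (le_of_eq ?_)
    refine Finset.sum_congr rfl fun p _ => abs_mul _ _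
  refine h1.trans ?_
  exact Finset.single_le_sum (f := fun σ : Conf N => ∑ p : Prs N, |rr σ p| * |g p.1.1 p.1.2|)
    (fun i _ => Finset.sum_nonneg fun p _ => by positivity) (Finset.mem_univ σ)

lemma LZ_diff {N : ℕ} (g : Fin N → Fin N → ℝ) (c a : ℝ) (ha : |a| ≤ 1) :
    LZ g (c + a) ≤ LZ g c + MM g := by
  have : ∑ σ, Real.exp (-(c + a) * uE g σ) ≤ Real.exp (MM g) * ∑ σ, Real.exp (-c * uE g σ) := by
    rw [Finset.mul_sum]
    refine Finset.sum_le_sum fun σ _ => ?_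
    rw [← Real.exp_add]
    apply Real.exp_le_exp.mpr
    have h1 : |a * uE g σ| ≤ MM g := by
      rw [abs_mul]
      refine le_trans ?_ (uE_abs g σ)
      exact mul_le_of_le_one_left (abs_nonneg _) ha
    have h2 := neg_abs_le (a * uE g σ)
    linarith
  have h2 := Real.log_le_log (Z_pos g (c + a)) this
  rw [Real.log_mul (Real.exp_pos _).ne' (Z_pos g c).ne', Real.log_exp] at h2
  rw [LZ, LZ]
  linarith

lemma gibbs_bound {N : ℕ} (g : Fin N → Fin N → ℝ) (c d : ℝ) (hd : 0 ≤ d) :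
    |gibbs 1 (HN N c d g) (UN N g)| ≤ MM g + N * Real.log (Real.cosh d) := by
  have h1 := gibbs_key g c d hd 1
  have h2 := gibbs_key g c d hd (-1)
  have h3 := LZ_diff g c 1 (by simp)
  have h4 := LZ_diff g c (-1) (by simp)
  rw [abs_le]
  constructor <;> linarith

lemma LZ_lower {N : ℕ} (g : Fin N → Fin N → ℝ) (c : ℝ) (σ : Conf N) : -c * uE g σ ≤ LZ g c := by
  rw [LZ, Real.le_log_iff_exp_le (Z_pos g c)]
  exact Finset.single_le_sum (f := fun σ => Real.exp (-c * uE g σ))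
    (fun _ _ => (Real.exp_pos _).le) (Finset.mem_univ σ)

lemma LZ_zero {N : ℕ} (g : Fin N → Fin N → ℝ) : LZ g 0 = N * Real.log 2 := by
  simp [LZ]

section Cont
attribute [local instance] Matrix.linftyOpNormedRing Matrix.linftyOpNormedAlgebra

lemma exp_cont (n : Type) [Fintype n] [DecidableEq n] :
    Continuous (fun A : Matrix n n ℂ => NormedSpace.exp A) := by
  let _ : NormedAlgebra ℚ (Matrix n n ℂ) := NormedAlgebra.restrictScalars ℚ ℂ _
  exact NormedSpace.exp_continuous
end Cont

lemma gibbs_cont (N : ℕ) (c d : ℝ) :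
    Continuous (fun g : Fin N → Fin N → ℝ => gibbs 1 (HN N c d g) (UN N g)) := by
  have hU : Continuous (fun g : Fin N → Fin N → ℝ => UN N g) := by
    simp_rw [UN, sum_prs (fun j k => (_ : Fin N → Fin N → ℝ) j k • (Sz N j * Sz N k))]
    fun_prop
  have hE : Continuous (fun g : Fin N → Fin N → ℝ =>
      NormedSpace.exp ((-1 : ℝ) • HN N c d g)) := by
    apply (exp_cont (Conf N)).comp
    simp only [HN]
    fun_prop
  simp only [gibbs]
  apply Complex.continuous_re.comp
  apply Continuous.div
  · exact (hE.matrix_mul hU).matrix_trace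
  · exact hE.matrix_trace
  · intro g h
    have hA : ((-1 : ℝ) • HN N c d g).IsHermitian := by rw [neg_HN]; exact HD_herm _ _ _
    have := trace_exp_pos hA
    rw [h] at this
    simp at this

lemma sg_sq {N : ℕ} (σ : Conf N) (j : Fin N) : sg σ j ^ 2 = 1 := by
  unfold sg; split_ifs <;> norm_num


lemma g_int {Ω : Type*} [MeasurableSpace Ω] (μ : Measure Ω) [IsProbabilityMeasure μ]
    (g : (N : ℕ) → Ω → Fin N → Fin N → ℝ)
    (hmeas : ∀ (N : ℕ) (j k : Fin N), Measurable fun ω => g N ω j k)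
    (hgauss : ∀ (N : ℕ) (j k : Fin N), j < k →
      Measure.map (fun ω => g N ω j k) μ = gaussianReal 0 1)
    {N : ℕ} (p : Prs N) : Integrable (fun ω => g N ω p.1.1 p.1.2) μ := by
  have h1 : Integrable (fun x : ℝ => x) (gaussianReal 0 1) :=
    (memLp_id_gaussianReal (μ := 0) (v := 1) 1).integrable le_rfl
  rw [← hgauss N p.1.1 p.1.2 p.2] at h1
  exact (integrable_map_measure (by fun_prop) (hmeas N _ _).aemeasurable).mp h1

lemma g_mean {Ω : Type*} [MeasurableSpace Ω] (μ : Measure Ω) [IsProbabilityMeasure μ]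
    (g : (N : ℕ) → Ω → Fin N → Fin N → ℝ)
    (hmeas : ∀ (N : ℕ) (j k : Fin N), Measurable fun ω => g N ω j k)
    (hgauss : ∀ (N : ℕ) (j k : Fin N), j < k →
      Measure.map (fun ω => g N ω j k) μ = gaussianReal 0 1)
    {N : ℕ} (p : Prs N) : ∫ ω, g N ω p.1.1 p.1.2 ∂μ = 0 := by
  have h1 : ∫ x : ℝ, x ∂(gaussianReal 0 1) = 0 := integral_id_gaussianReal
  rw [← hgauss N p.1.1 p.1.2 p.2, integral_map (hmeas N _ _).aemeasurable (by fun_prop)] at h1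
  exact h1

lemma uE_int {Ω : Type*} [MeasurableSpace Ω] (μ : Measure Ω) [IsProbabilityMeasure μ]
    (g : (N : ℕ) → Ω → Fin N → Fin N → ℝ)
    (hmeas : ∀ (N : ℕ) (j k : Fin N), Measurable fun ω => g N ω j k)
    (hgauss : ∀ (N : ℕ) (j k : Fin N), j < k →
      Measure.map (fun ω => g N ω j k) μ = gaussianReal 0 1)
    {N : ℕ} (σ : Conf N) : Integrable (fun ω => uE (g N ω) σ) μ := by
  unfold uE
  exact (integrable_finsetSum _ fun p _ => (g_int μ g hmeas hgauss p).const_mul _).neg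

lemma uE_mean {Ω : Type*} [MeasurableSpace Ω] (μ : Measure Ω) [IsProbabilityMeasure μ]
    (g : (N : ℕ) → Ω → Fin N → Fin N → ℝ)
    (hmeas : ∀ (N : ℕ) (j k : Fin N), Measurable fun ω => g N ω j k)
    (hgauss : ∀ (N : ℕ) (j k : Fin N), j < k →
      Measure.map (fun ω => g N ω j k) μ = gaussianReal 0 1)
    {N : ℕ} (σ : Conf N) : ∫ ω, uE (g N ω) σ ∂μ = 0 := by
  unfold uE
  rw [integral_neg, integral_finsetSum _ fun p _ => (g_int μ g hmeas hgauss p).const_mul _]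
  simp [integral_const_mul, g_mean μ g hmeas hgauss]

lemma MM_int {Ω : Type*} [MeasurableSpace Ω] (μ : Measure Ω) [IsProbabilityMeasure μ]
    (g : (N : ℕ) → Ω → Fin N → Fin N → ℝ)
    (hmeas : ∀ (N : ℕ) (j k : Fin N), Measurable fun ω => g N ω j k)
    (hgauss : ∀ (N : ℕ) (j k : Fin N), j < k →
      Measure.map (fun ω => g N ω j k) μ = gaussianReal 0 1)
    {N : ℕ} : Integrable (fun ω => MM (g N ω)) μ := by
  unfold MM
  exact integrable_finsetSum _ fun σ _ => integrable_finsetSum _ fun p _ =>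
    (g_int μ g hmeas hgauss p).abs.const_mul _

lemma gibbs_int {Ω : Type*} [MeasurableSpace Ω] (μ : Measure Ω) [IsProbabilityMeasure μ]
    (g : (N : ℕ) → Ω → Fin N → Fin N → ℝ)
    (hmeas : ∀ (N : ℕ) (j k : Fin N), Measurable fun ω => g N ω j k)
    (hgauss : ∀ (N : ℕ) (j k : Fin N), j < k →
      Measure.map (fun ω => g N ω j k) μ = gaussianReal 0 1)
    {N : ℕ} (c d : ℝ) (hd : 0 ≤ d) :
    Integrable (fun ω => gibbs 1 (HN N c d (g N ω)) (UN N (g N ω))) μ := by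
  have hm : Measurable (fun ω => g N ω) :=
    measurable_pi_iff.mpr fun j => measurable_pi_iff.mpr fun k => hmeas N j k
  refine Integrable.mono' ((MM_int μ g hmeas hgauss (N := N)).add
    (integrable_const (N * Real.log (Real.cosh d)))) ?_ ?_
  · exact ((gibbs_cont N c d).measurable.comp hm).aestronglyMeasurable
  · exact Filter.Eventually.of_forall fun ω => gibbs_bound (g N ω) c d hd

lemma gibbs_mean_upper {Ω : Type*} [MeasurableSpace Ω] (μ : Measure Ω) [IsProbabilityMeasure μ]
    (g : (N : ℕ) → Ω → Fin N → Fin N → ℝ)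
    (hmeas : ∀ (N : ℕ) (j k : Fin N), Measurable fun ω => g N ω j k)
    (hgauss : ∀ (N : ℕ) (j k : Fin N), j < k →
      Measure.map (fun ω => g N ω j k) μ = gaussianReal 0 1)
    {N : ℕ} (c d : ℝ) (hd : 0 ≤ d) (hc : 0 < c) :
    ∫ ω, gibbs 1 (HN N c d (g N ω)) (UN N (g N ω)) ∂μ
      ≤ N * (c⁻¹ * (Real.log 2 + Real.log (Real.cosh d))) := by
  have hp : ∀ ω, gibbs 1 (HN N c d (g N ω)) (UN N (g N ω))
      ≤ N * (c⁻¹ * (Real.log 2 + Real.log (Real.cosh d))) + uE (g N ω) 0 := by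
    intro ω
    have h1 := gibbs_key (g N ω) c d hd (-c)
    rw [add_neg_cancel, LZ_zero] at h1
    have h2 := LZ_lower (g N ω) c 0
    have h3 : c * (N * (c⁻¹ * (Real.log 2 + Real.log (Real.cosh d))) + uE (g N ω) 0)
        = N * (Real.log 2 + Real.log (Real.cosh d)) + c * uE (g N ω) 0 := by
      field_simp
    refine le_of_mul_le_mul_left ?_ hc
    rw [h3]
    linarith
  have := integral_mono (gibbs_int μ g hmeas hgauss c d hd)
    ((integrable_const _).add (uE_int μ g hmeas hgauss (0 : Conf N))) hp
  simp only [Pi.add_apply] at this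
  rw [integral_add (integrable_const _) (uE_int μ g hmeas hgauss (0 : Conf N)),
    uE_mean μ g hmeas hgauss] at this
  simpa using this


lemma exp_uE {Ω : Type*} [MeasurableSpace Ω] (μ : Measure Ω) [IsProbabilityMeasure μ]
    (g : (N : ℕ) → Ω → Fin N → Fin N → ℝ)
    (hmeas : ∀ (N : ℕ) (j k : Fin N), Measurable fun ω => g N ω j k)
    (hgauss : ∀ (N : ℕ) (j k : Fin N), j < k →
      Measure.map (fun ω => g N ω j k) μ = gaussianReal 0 1)
    (hindep : ∀ N : ℕ, iIndepFun
      (fun (p : {q : Fin N × Fin N // q.1 < q.2}) ω => g N ω p.1.1 p.1.2) μ)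
    {N : ℕ} (hN : 0 < N) (σ : Conf N) (t : ℝ) :
    Integrable (fun ω => Real.exp (-t * uE (g N ω) σ)) μ ∧
    ∫ ω, Real.exp (-t * uE (g N ω) σ) ∂μ ≤ Real.exp (N * (t ^ 2 / 2)) := by
  set X : Prs N → Ω → ℝ := fun p ω => rr σ p * g N ω p.1.1 p.1.2 with hX
  have hXm : ∀ p, Measurable (X p) := fun p => (hmeas N _ _).const_mul _
  have hXi : iIndepFun X μ :=
    (hindep N).comp (fun p x => rr σ p * x) (fun p => measurable_const_mul _)
  have hr : ∀ p : Prs N, rr σ p ^ 2 = 1 / N := by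
    intro p
    rw [rr, mul_pow, mul_pow, sg_sq, sg_sq, div_pow, Real.sq_sqrt (Nat.cast_nonneg N)]
    simp
  have hmg : ∀ p, mgf (X p) μ t = Real.exp (t ^ 2 / (2 * N)) := by
    intro p
    rw [hX]
    simp only
    rw [mgf_const_mul, mgf_gaussianReal (hgauss N p.1.1 p.1.2 p.2), mul_pow, hr]
    congr 1
    simp
    field_simp
  have hXint : ∀ p, Integrable (fun ω => Real.exp (t * X p ω)) μ := by
    intro p
    have : 0 < mgf (X p) μ t := by rw [hmg]; exact Real.exp_pos _
    exact mgf_pos_iff.mp this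
  have he : ∀ ω, -t * uE (g N ω) σ = t * (∑ p, X p) ω := by
    intro ω
    rw [uE, Finset.sum_apply]
    ring
  simp_rw [he]
  refine ⟨hXi.integrable_exp_mul_sum hXm fun p _ => hXint p, ?_⟩
  have h1 := hXi.mgf_sum (t := t) hXm Finset.univ
  rw [mgf] at h1
  rw [h1]
  simp_rw [hmg]
  rw [Finset.prod_const, ← Real.exp_nat_mul]
  apply Real.exp_le_exp.mpr
  have hcard : (Finset.univ : Finset (Prs N)).card ≤ N * N := by
    rw [Finset.card_univ]
    refine (Fintype.card_subtype_le _).trans ?_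
    simp
  have hN' : (0 : ℝ) < N := by exact_mod_cast hN
  have hcard' : ((Finset.univ : Finset (Prs N)).card : ℝ) ≤ N * N := by exact_mod_cast hcard
  calc ((Finset.univ : Finset (Prs N)).card : ℝ) * (t ^ 2 / (2 * N))
      ≤ N * N * (t ^ 2 / (2 * N)) := by gcongr
    _ = N * (t ^ 2 / 2) := by field_simp

lemma gibbs_mean_lower {Ω : Type*} [MeasurableSpace Ω] (μ : Measure Ω) [IsProbabilityMeasure μ]
    (g : (N : ℕ) → Ω → Fin N → Fin N → ℝ)
    (hmeas : ∀ (N : ℕ) (j k : Fin N), Measurable fun ω => g N ω j k)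
    (hgauss : ∀ (N : ℕ) (j k : Fin N), j < k →
      Measure.map (fun ω => g N ω j k) μ = gaussianReal 0 1)
    (hindep : ∀ N : ℕ, iIndepFun
      (fun (p : {q : Fin N × Fin N // q.1 < q.2}) ω => g N ω p.1.1 p.1.2) μ)
    {N : ℕ} (hN : 0 < N) (c : ℝ) :
    - (N * (Real.log 2 + (c + 1) ^ 2 / 2))
      ≤ ∫ ω, gibbs 1 (HN N c 0 (g N ω)) (UN N (g N ω)) ∂μ := by
  set t := c + 1 with ht
  set M : ℝ := Real.exp (N * (Real.log 2 + t ^ 2 / 2)) with hM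
  have hM0 : 0 < M := Real.exp_pos _
  have hZi : Integrable (fun ω => ∑ σ, Real.exp (-t * uE (g N ω) σ)) μ :=
    integrable_finsetSum _ fun σ _ => (exp_uE μ g hmeas hgauss hindep hN σ t).1
  have hZm : ∫ ω, ∑ σ, Real.exp (-t * uE (g N ω) σ) ∂μ ≤ M := by
    rw [integral_finsetSum _ fun σ _ => (exp_uE μ g hmeas hgauss hindep hN σ t).1]
    refine (Finset.sum_le_sum fun σ _ =>
      (exp_uE μ g hmeas hgauss hindep hN σ t).2).trans (le_of_eq ?_)
    rw [Finset.sum_const, hM, mul_add, Real.exp_add,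
      Real.exp_nat_mul (Real.log 2), Real.exp_log two_pos]
    simp
  have hp : ∀ ω, (-c * uE (g N ω) 0 - (∑ σ, Real.exp (-t * uE (g N ω) σ)) * M⁻¹)
      + (1 - N * (Real.log 2 + t ^ 2 / 2))
      ≤ gibbs 1 (HN N c 0 (g N ω)) (UN N (g N ω)) := by
    intro ω
    have h1 := gibbs_key (g N ω) c 0 le_rfl 1
    simp only [Real.cosh_zero, Real.log_one, mul_zero, sub_zero, one_mul] at h1
    have h2 := LZ_lower (g N ω) c 0
    have hZ := Z_pos (g N ω) t
    have h3 := Real.log_le_sub_one_of_pos (mul_pos hZ (inv_pos.mpr hM0))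
    rw [Real.log_mul hZ.ne' (inv_pos.mpr hM0).ne', Real.log_inv, hM, Real.log_exp, ← hM] at h3
    have h4 : LZ (g N ω) (c + 1) = Real.log (∑ σ, Real.exp (-t * uE (g N ω) σ)) := rfl
    linarith
  have i1 : Integrable (fun ω => -c * uE (g N ω) (0 : Conf N)) μ :=
    (uE_int μ g hmeas hgauss (0 : Conf N)).const_mul _
  have i2 : Integrable (fun ω => (∑ σ, Real.exp (-t * uE (g N ω) σ)) * M⁻¹) μ :=
    hZi.mul_const _
  have := integral_mono ((i1.sub i2).add (integrable_const _))
    (gibbs_int μ g hmeas hgauss c 0 le_rfl) hp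
  simp only [Pi.add_apply, Pi.sub_apply] at this
  have i3 : Integrable (fun ω => -c * uE (g N ω) (0 : Conf N)
      - (∑ σ, Real.exp (-t * uE (g N ω) σ)) * M⁻¹) μ := i1.sub i2
  rw [integral_add i3 (integrable_const _), integral_sub i1 i2, integral_const_mul,
    uE_mean μ g hmeas hgauss, integral_mul_const] at this
  have h5 : (∫ ω, ∑ σ, Real.exp (-t * uE (g N ω) σ) ∂μ) * M⁻¹ ≤ 1 := by
    rw [← div_eq_mul_inv]
    exact (div_le_one hM0).mpr hZm
  simp only [integral_const, probReal_univ, one_smul, mul_zero] at this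
  linarith


theorem stmt14
    {Ω : Type*} [MeasurableSpace Ω] (μ : Measure Ω) [IsProbabilityMeasure μ]
    (β J b : ℝ) (hβ : 0 < β) (hJ : 0 < J) (hb : 0 ≤ b)
    (g : (N : ℕ) → Ω → Fin N → Fin N → ℝ)
    (hmeas : ∀ (N : ℕ) (j k : Fin N), Measurable fun ω => g N ω j k)
    (hgauss : ∀ (N : ℕ) (j k : Fin N), j < k →
      Measure.map (fun ω => g N ω j k) μ = gaussianReal 0 1)
    (hindep : ∀ N : ℕ, iIndepFun
      (fun (p : {q : Fin N × Fin N // q.1 < q.2}) ω => g N ω p.1.1 p.1.2) μ)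
    (a : ℝ) (ha : 0 < a) :
    ubar μ g (β * J) (β * b) + a⁻¹ * Real.log (Real.cosh (β * b))
      ≥ ubar μ g (β * J + a) 0 := by
  have hc : 0 < β * J := mul_pos hβ hJ
  have hd : 0 ≤ β * b := mul_nonneg hβ.le hb
  set c := β * J
  set d := β * b
  set C := a⁻¹ * Real.log (Real.cosh d) with hC
  unfold ubar
  set f : ℕ → ℝ := fun N => (∫ ω, gibbs 1 (HN N c d (g N ω)) (UN N (g N ω)) ∂μ) / N with hf
  set h : ℕ → ℝ :=
    fun N => (∫ ω, gibbs 1 (HN N (c + a) 0 (g N ω)) (UN N (g N ω)) ∂μ) / N with hh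
  have hev : ∀ᶠ N : ℕ in Filter.atTop, 0 < N := Filter.eventually_gt_atTop 0
  have hfh : ∀ᶠ N : ℕ in Filter.atTop, h N ≤ f N + C := by
    filter_upwards [hev] with N hN
    have hN' : (0 : ℝ) < N := by exact_mod_cast hN
    have h1 := integral_mono (gibbs_int μ g hmeas hgauss (N := N) (c + a) 0 le_rfl)
      ((gibbs_int μ g hmeas hgauss (N := N) c d hd).add (integrable_const (N * C)))
      (fun ω => gibbs_main (g N ω) c d hd a ha)
    simp only [Pi.add_apply] at h1
    rw [integral_add (gibbs_int μ g hmeas hgauss (N := N) c d hd) (integrable_const _)] at h1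
    simp only [integral_const, probReal_univ, one_smul] at h1
    simp only [hf, hh]
    rw [div_add' _ _ _ hN'.ne', div_le_div_iff_of_pos_right hN']
    linarith
  have hlow : ∀ᶠ N : ℕ in Filter.atTop, -(Real.log 2 + (c + a + 1) ^ 2 / 2) ≤ h N := by
    filter_upwards [hev] with N hN
    have hN' : (0 : ℝ) < N := by exact_mod_cast hN
    have h1 := gibbs_mean_lower μ g hmeas hgauss hindep hN (c + a)
    simp only [hh]
    rw [le_div_iff₀ hN']
    linarith
  have hup : ∀ᶠ N : ℕ in Filter.atTop,
      f N ≤ c⁻¹ * (Real.log 2 + Real.log (Real.cosh d)) := by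
    filter_upwards [hev] with N hN
    have hN' : (0 : ℝ) < N := by exact_mod_cast hN
    have h1 := gibbs_mean_upper μ g hmeas hgauss (N := N) c d hd hc
    simp only [hf]
    rw [div_le_iff₀ hN']
    linarith
  have hcob : Filter.IsCoboundedUnder (· ≥ ·) Filter.atTop f :=
    Filter.IsBoundedUnder.isCoboundedUnder_ge ⟨_, Filter.eventually_map.mpr hup⟩
  have hcob' : Filter.IsCoboundedUnder (· ≥ ·) Filter.atTop (fun N => f N + C) :=
    Filter.IsBoundedUnder.isCoboundedUnder_ge
      ⟨c⁻¹ * (Real.log 2 + Real.log (Real.cosh d)) + C, Filter.eventually_map.mpr (by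
        filter_upwards [hup] with N hN
        linarith)⟩
  have hbdh : Filter.IsBoundedUnder (· ≥ ·) Filter.atTop h := ⟨_, Filter.eventually_map.mpr hlow⟩
  have hbdf : Filter.IsBoundedUnder (· ≥ ·) Filter.atTop f :=
    ⟨-(Real.log 2 + (c + a + 1) ^ 2 / 2) - C, Filter.eventually_map.mpr (by
      filter_upwards [hlow, hfh] with N h1 h2
      linarith)⟩
  have hadd := liminf_add_const Filter.atTop f C hcob hbdf
  rw [ge_iff_le, ← hadd]
  exact Filter.liminf_le_liminf hfh hbdh hcob'
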